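/- arXiv:math/0508172 — 2 statements merged into one kernel-verified Lean document; each statement's English description precedes it below -/
import Mathlib

section
/- Let (G, 𝓐) be a local convergence pairing on a Peano continuum X without cut points, and let A, B ∈ 𝓐. If (f_i) ⊆ st(A) ∩ st(B) acts as a convergence sequence on both A and B, and p is the attractor of (f_i) in its action on A and also the attractor of (f_i) in its action on B, then the repeller n of (f_i) in its action on A is also the repeller of (f_i) in its action on B. -/
/-! Suppose the repellers `n` and `n'` differ. Every point of `A ∩ B` is then moved to `p`, uniformly,
and `A ∩ B` is invariant, so `A ∩ B = {p}` (`inter_eq_singleton`). One of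
`n`, `n'` differs from `p`; by symmetry let it be `n'` (`no_other_repeller`). Pass to a subsequence
along which `f i • n'` converges to some `q ∈ B`, and take a crossing sequence `A, A₁, …, Aₘ, B`
whose intermediate terms avoid both `p` and `q`.

The inverses `g i = (f i)⁻¹` act on `B` as a convergence sequence with repeller `p` and attractor
`n'`. The sets `g i • Aₘ` come arbitrarily close to `n'`, since `Aₘ` crosses `B` and misses `p`
(`meets_of_crosses_convSeq`). Each `Aⱼ` is closed and misses `q`, so `n' ∉ g i • Aⱼ` for large `i`;
hence a translate `g i • Aⱼ` that comes close to `n'` takes each value only finitely often, and by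
nullity it shrinks to `n'` (`shrinks_of_meets`). A set crossing a shrinking set comes close to `n'`
(`meets_of_crosses_shrinks`, by local connectedness), so this propagates down the crossing sequence
to `A₁` and finally shows that `A = g i • A` itself comes arbitrarily close to `n'`. Thus
`n' ∈ A ∩ B = {p}`, a contradiction. -/

open Set Filter Topology Pointwise

/-- The set `E` separates the points `x` and `y`: both lie outside `E` and in
different connected components of the complement of `E`. -/
def SepPts {X : Type*} [TopologicalSpace X] (E : Set X) (x y : X) : Prop :=
  x ∉ E ∧ y ∉ E ∧ connectedComponentIn Eᶜ x ≠ connectedComponentIn Eᶜ y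

/-- The set `E` separates the set `Y ⊆ X \ E`: two points of `Y` lie in different
connected components of the complement of `E`. -/
def SepSet {X : Type*} [TopologicalSpace X] (E Y : Set X) : Prop :=
  Y ⊆ Eᶜ ∧ ∃ x ∈ Y, ∃ y ∈ Y, connectedComponentIn Eᶜ x ≠ connectedComponentIn Eᶜ y

/-- Two (closed) sets `A` and `B` cross: they intersect, or each separates the other. -/
def Crosses {X : Type*} [TopologicalSpace X] (A B : Set X) : Prop :=
  (A ∩ B).Nonempty ∨ (SepSet A B ∧ SepSet B A)

/-- There is a (finite) crossing sequence in `𝓐` from `A` to `B`. -/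
def CrossSeqFromTo {X : Type*} [TopologicalSpace X] (𝓐 : Set (Set X)) (A B : Set X) : Prop :=
  ∃ (n : ℕ) (c : ℕ → Set X), c 0 = A ∧ c n = B ∧ (∀ i ≤ n, c i ∈ 𝓐) ∧
    ∀ i < n, Crosses (c i) (c (i + 1))

/-- A collection `𝓐` is cross-connected: any two of its elements are joined by a
crossing sequence in `𝓐`. -/
def CrossConnected {X : Type*} [TopologicalSpace X] (𝓐 : Set (Set X)) : Prop :=
  ∀ A ∈ 𝓐, ∀ B ∈ 𝓐, CrossSeqFromTo 𝓐 A B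

/-- There is a crossing sequence `A, A_1, …, A_n, B` in `𝓐` (with `n ≥ 1`) whose
intermediate terms `A_1, …, A_n` are disjoint from `D`. -/
def CrossSeqAvoiding {X : Type*} [TopologicalSpace X] (𝓐 : Set (Set X)) (A B D : Set X) :
    Prop :=
  ∃ n : ℕ, 1 ≤ n ∧ ∃ c : ℕ → Set X, c 0 = A ∧ c (n + 1) = B ∧ (∀ i ≤ n + 1, c i ∈ 𝓐) ∧
    (∀ i ≤ n, Crosses (c i) (c (i + 1))) ∧ ∀ i, 1 ≤ i → i ≤ n → c i ∩ D = ∅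

/-- A collection of subsets of a metric space is null if for every `ε > 0` only finitely
many of its members have diameter greater than `ε`. -/
def NullFam {X : Type*} [PseudoMetricSpace X] (𝓐 : Set (Set X)) : Prop :=
  ∀ ε : ℝ, 0 < ε → {A ∈ 𝓐 | ε < Metric.diam A}.Finite

/-- A collection `𝓐` is fine if any two distinct points are separated by the union of
some finite subcollection of `𝓐`. -/
def FineFam {X : Type*} [PseudoMetricSpace X] (𝓐 : Set (Set X)) : Prop :=
  ∀ x y : X, x ≠ y → ∃ 𝓑 ⊆ 𝓐, 𝓑.Finite ∧ SepPts (⋃₀ 𝓑) x y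

/-- A sequence of maps `T i : X → X` acts as a convergence sequence on the subset `A`,
with repeller `n ∈ A` and attractor `p ∈ A`: for every compact `C ⊆ A \ {n}` and every
open neighborhood `U` of `p`, eventually `T i '' C ⊆ U`. -/
def ConvSeqOn {X : Type*} [TopologicalSpace X] (A : Set X) (T : ℕ → X → X) (n p : X) :
    Prop :=
  n ∈ A ∧ p ∈ A ∧ ∀ C : Set X, C ⊆ A → IsCompact C → n ∉ C →
    ∀ U : Set X, IsOpen U → p ∈ U → ∀ᶠ i in atTop, T i '' C ⊆ U

/-- The stabilizer of a subset `A ⊆ X` in `G`. -/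
def stab (G : Type*) {X : Type*} [Group G] [MulAction G X] (A : Set X) : Set G :=
  {g : G | g • A = A}

/-- The subset `S` of the group `G` acts as a convergence group on `A ⊆ X`: every
sequence of distinct elements of `S` has a subsequence acting as a convergence
sequence on `A`. -/
def ConvGroupOn {G X : Type*} [Group G] [MulAction G X] [TopologicalSpace X]
    (S : Set G) (A : Set X) : Prop :=
  ∀ g : ℕ → G, (∀ i, g i ∈ S) → Function.Injective g →
    ∃ k : ℕ → ℕ, StrictMono k ∧ ∃ n p : X,
      ConvSeqOn A (fun i => (g (k i) • · : X → X)) n p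

/-- `(G, 𝓐)` is a local convergence pairing on `X`. -/
structure IsLocalConvPairing (G : Type*) {X : Type*} [Group G] [MulAction G X]
    [MetricSpace X] (𝓐 : Set (Set X)) : Prop where
  closed : ∀ A ∈ 𝓐, IsClosed A
  invariant : ∀ g : G, ∀ A ∈ 𝓐, g • A ∈ 𝓐
  big : ∀ A ∈ 𝓐, 2 < A.encard
  null : NullFam 𝓐
  fine : FineFam 𝓐
  stabConv : ∀ A ∈ 𝓐, ConvGroupOn (stab G A) A
  connect : ∀ A ∈ 𝓐, ∀ B ∈ 𝓐, (A ∩ B).encard ≤ 2 →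
    (∀ c : X, A ∩ B = {c} → ∀ b ∈ B, b ≠ c → CrossSeqAvoiding 𝓐 A B {b, c}) ∧
    ((¬ ∃ c : X, A ∩ B = {c}) → CrossSeqAvoiding 𝓐 A B (A ∩ B))

/-- The sets `E i` eventually meet every neighborhood of `x`. -/
def EvMeets {X : Type*} [TopologicalSpace X] (E : ℕ → Set X) (x : X) : Prop :=
  ∀ V ∈ 𝓝 x, ∀ᶠ i in atTop, (E i ∩ V).Nonempty

/-- The sets `E i` shrink to `x`: they are eventually contained in every neighborhood of `x`. -/
def EvShrinks {X : Type*} [TopologicalSpace X] (E : ℕ → Set X) (x : X) : Prop :=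
  ∀ V ∈ 𝓝 x, ∀ᶠ i in atTop, E i ⊆ V

/-- In a null family, sets that come arbitrarily close to `x` without containing it shrink to `x`:
no member can occur infinitely often. -/
lemma shrinks_of_meets {X : Type*} [MetricSpace X] [CompactSpace X] {𝓐 : Set (Set X)}
    (hnull : NullFam 𝓐) (hcl : ∀ A ∈ 𝓐, IsClosed A) {E : ℕ → Set X} (hE : ∀ i, E i ∈ 𝓐) {x : X}
    (hx : ∀ᶠ i in atTop, x ∉ E i) (hm : EvMeets E x) : EvShrinks E x := by
  intro V hV
  obtain ⟨ε, hε, hball⟩ := Metric.mem_nhds_iff.1 hV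
  have hne : ∀ C ∈ {A ∈ 𝓐 | ε / 2 < Metric.diam A}, ∀ᶠ i in atTop, E i ≠ C := by
    rintro C ⟨hC, -⟩
    by_cases hxC : x ∈ C
    · filter_upwards [hx] with i hi h
      exact hi (h ▸ hxC)
    · filter_upwards [hm Cᶜ ((hcl C hC).isOpen_compl.mem_nhds hxC)] with i hi h
      obtain ⟨y, hy, hy'⟩ := hi
      exact hy' (h ▸ hy)
  have hall := (eventually_all_finite (hnull (ε / 2) (half_pos hε))).2 hne
  filter_upwards [hall, hm _ (Metric.ball_mem_nhds x (half_pos hε))] with i hi hi'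
  obtain ⟨y, hy, hyb⟩ := hi'
  have hd : Metric.diam (E i) ≤ ε / 2 := by
    by_contra hlt
    exact hi (E i) ⟨hE i, not_le.1 hlt⟩ rfl
  intro z hz
  apply hball
  have h1 : dist z y ≤ Metric.diam (E i) :=
    Metric.dist_le_diam_of_mem (hcl _ (hE i)).isCompact.isBounded hz hy
  have h2 : dist y x < ε / 2 := hyb
  have h3 := dist_triangle z y x
  rw [Metric.mem_ball]
  linarith

lemma exists_open_connected {X : Type*} [TopologicalSpace X] [LocallyConnectedSpace X] {x : X}
    {V : Set X} (hV : V ∈ 𝓝 x) : ∃ W ⊆ V, IsOpen W ∧ x ∈ W ∧ IsPreconnected W := by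
  obtain ⟨W, ⟨h1, h2, h3⟩, h4⟩ := (LocallyConnectedSpace.open_connected_basis x).mem_iff.1 hV
  exact ⟨W, h4, h1, h2, h3.isPreconnected⟩

/-- If two points of different components of `X \ C` are moved by `g` into a connected set `W`,
then `g • C` meets `W`. -/
lemma meets_of_component_ne {G X : Type*} [Group G] [MulAction G X] [TopologicalSpace X]
    [ContinuousConstSMul G X] {C W : Set X} (hW : IsPreconnected W) (g : G) {y z : X}
    (hyz : connectedComponentIn Cᶜ y ≠ connectedComponentIn Cᶜ z) (hy : g • y ∈ W)
    (hz : g • z ∈ W) : (g • C ∩ W).Nonempty := by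
  by_contra hemp
  have hpre : IsPreconnected ((Homeomorph.smul g : X ≃ₜ X) ⁻¹' W) :=
    (Homeomorph.isPreconnected_preimage _).2 hW
  have hsub : (Homeomorph.smul g : X ≃ₜ X) ⁻¹' W ⊆ Cᶜ := by
    intro w hw hwC
    exact hemp ⟨g • w, smul_mem_smul_set hwC, hw⟩
  have hzm := hpre.subset_connectedComponentIn (x := y) hy hsub (show z ∈ _ from hz)
  exact hyz (connectedComponentIn_eq hzm)

lemma meets_of_crosses_shrinks {G X : Type*} [Group G] [MulAction G X] [TopologicalSpace X]
    [LocallyConnectedSpace X] [ContinuousConstSMul G X] {g : ℕ → G} {x : X} {C F : Set X}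
    (hc : Crosses C F) (hF : EvShrinks (fun i => g i • F) x) :
    EvMeets (fun i => g i • C) x := by
  intro V hV
  obtain ⟨W, hWV, hWo, hxW, hWc⟩ := exists_open_connected hV
  filter_upwards [hF W (hWo.mem_nhds hxW)] with i hi
  refine Nonempty.mono (inter_subset_inter_right _ hWV) ?_
  rcases hc with ⟨y, hyC, hyF⟩ | ⟨⟨-, y, hy, z, hz, hyz⟩, -⟩
  · exact ⟨g i • y, smul_mem_smul_set hyC, hi (smul_mem_smul_set hyF)⟩
  · exact meets_of_component_ne hWc (g i) hyz (hi (smul_mem_smul_set hy))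
      (hi (smul_mem_smul_set hz))

/-- The attractor of a convergence sequence on a set with at least three points is not isolated. -/
lemma attractor_not_isolated {G X : Type*} [Group G] [MulAction G X] [TopologicalSpace X]
    {g : ℕ → G} {B : Set X} {p x : X} (hB : 2 < B.encard) (hg : ∀ i, g i • B = B)
    (hc : ConvSeqOn B (fun i (y : X) => g i • y) p x) {W : Set X} (hWo : IsOpen W) (hx : x ∈ W) :
    ∃ r ∈ B, r ∈ W ∧ r ≠ x := by
  have h1 : 1 < (B \ {p}).encard := by
    have h2 := Set.encard_sdiff_singleton_add_one hc.1
    by_contra hle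
    rw [not_lt] at hle
    have h3 : B.encard ≤ 1 + 1 := h2 ▸ add_le_add_left hle 1
    exact absurd h3 (by rw [one_add_one_eq_two]; exact not_le.2 hB)
  obtain ⟨y, z, hy, hz, hyz⟩ := Set.one_lt_encard_iff.1 h1
  have hmove : ∀ w ∈ B \ {p}, ∀ᶠ i in atTop, g i • w ∈ W := by
    intro w hw
    filter_upwards [hc.2.2 {w} (by simpa using hw.1) isCompact_singleton
      (fun h => hw.2 (by simpa using h.symm)) W hWo hx] with i hi
    exact hi ⟨w, rfl, rfl⟩
  obtain ⟨i, hiy, hiz⟩ := ((hmove y hy).and (hmove z hz)).exists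
  have hmem : ∀ w ∈ B, g i • w ∈ B := fun w hw => hg i ▸ smul_mem_smul_set hw
  by_cases hyx : g i • y = x
  · refine ⟨g i • z, hmem z hz.1, hiz, fun h => hyz ?_⟩
    exact MulAction.injective (g i) (hyx.trans h.symm)
  · exact ⟨g i • y, hmem y hy.1, hiy, hyx⟩

/-- If `C` crosses `B` and misses the repeller of `g i` on `B`, then the translates `g i • C` come
arbitrarily close to the attractor. -/
lemma meets_of_crosses_convSeq {G X : Type*} [Group G] [MulAction G X] [MetricSpace X]
    [CompactSpace X] [LocallyConnectedSpace X] [ContinuousConstSMul G X] {g : ℕ → G}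
    {B C : Set X} {p x : X} (hB : 2 < B.encard) (hBc : IsClosed B) (hCc : IsClosed C)
    (hg : ∀ i, g i • B = B) (hc : ConvSeqOn B (fun i (y : X) => g i • y) p x)
    (hp : p ∉ C) (hcr : Crosses C B) : EvMeets (fun i => g i • C) x := by
  intro V hV
  obtain ⟨W, hWV, hWo, hxW, hWc⟩ := exists_open_connected hV
  have hmove : ∀ w ∈ B, w ≠ p → ∀ᶠ i in atTop, g i • w ∈ W := by
    intro w hw hwp
    filter_upwards [hc.2.2 {w} (by simpa using hw) isCompact_singleton
      (fun h => hwp (by simpa using h.symm)) W hWo hxW] with i hi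
    exact hi ⟨w, rfl, rfl⟩
  rcases hcr with ⟨y, hyC, hyB⟩ | ⟨⟨hBC, y, hy, z, hz, hyz⟩, -⟩
  · filter_upwards [hmove y hyB (fun h => hp (h ▸ hyC))] with i hi
    exact ⟨g i • y, smul_mem_smul_set hyC, hWV hi⟩
  · set U := connectedComponentIn Cᶜ p with hU
    have hUo : IsOpen U := hCc.isOpen_compl.connectedComponentIn
    have hpU : p ∈ U := mem_connectedComponentIn hp
    -- a point `k` of `B` whose component differs from that of the repeller
    obtain ⟨k, hk, hkU⟩ : ∃ k ∈ B, connectedComponentIn Cᶜ k ≠ U := by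
      by_contra hno
      push Not at hno
      exact hyz ((hno y hy).trans (hno z hz).symm)
    have hkp : k ≠ p := fun h => hkU (by rw [h])
    obtain ⟨r, hrB, hrW, hrx⟩ := attractor_not_isolated hB hg hc hWo hxW
    -- `g i` carries `B \ U` close to `x`, hence off `r`, so `r` comes from a point of `B ∩ U`
    have hr := hc.2.2 (B \ U) sdiff_subset ((hBc.sdiff hUo).isCompact) (fun h => h.2 hpU) {r}ᶜ
      isOpen_compl_singleton (fun h => hrx (by simpa using h.symm))
    filter_upwards [hmove k hk hkp, hr] with i hik hir
    refine Nonempty.mono (inter_subset_inter_right _ hWV) ?_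
    have hrB' : (g i)⁻¹ • r ∈ B := by
      rw [← Set.mem_smul_set_iff_inv_smul_mem, hg i]
      exact hrB
    have hrU : (g i)⁻¹ • r ∈ U := by
      by_contra hno
      exact hir ⟨_, ⟨hrB', hno⟩, rfl⟩ (smul_inv_smul (g i) r)
    refine meets_of_component_ne hWc (g i) (y := k) (z := (g i)⁻¹ • r) ?_ hik
      (by rwa [smul_inv_smul])
    rw [← connectedComponentIn_eq hrU]
    exact hkU

/-- The inverses of a convergence sequence form one with repeller and attractor exchanged. -/
lemma convSeq_inv {G X : Type*} [Group G] [MulAction G X] [MetricSpace X] [CompactSpace X]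
    {f : ℕ → G} {B : Set X} {n p : X} (hBc : IsClosed B) (hf : ∀ i, f i • B = B)
    (hc : ConvSeqOn B (fun i (y : X) => f i • y) n p) :
    ConvSeqOn B (fun i (y : X) => (f i)⁻¹ • y) p n := by
  refine ⟨hc.2.1, hc.1, fun K hKB hK hpK U hU hnU => ?_⟩
  filter_upwards [hc.2.2 (B \ U) sdiff_subset (hBc.sdiff hU).isCompact (fun h => h.2 hnU) Kᶜ
    hK.isClosed.isOpen_compl hpK] with i hi
  rintro _ ⟨y, hy, rfl⟩
  by_contra hno
  have hyB : (f i)⁻¹ • y ∈ B := by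
    rw [← Set.mem_smul_set_iff_inv_smul_mem, hf i]
    exact hKB hy
  have := hi ⟨_, ⟨hyB, hno⟩, rfl⟩
  simp only [smul_inv_smul] at this
  exact this hy

/-- With distinct repellers, all of the invariant set `A ∩ B` is moved uniformly to `p`. -/
lemma inter_eq_singleton {G X : Type*} [Group G] [MulAction G X] [MetricSpace X] [CompactSpace X]
    {f : ℕ → G} {A B : Set X} {n n' p : X} (hAc : IsClosed A) (hBc : IsClosed B)
    (hfA : ∀ i, f i • A = A) (hfB : ∀ i, f i • B = B)
    (hcA : ConvSeqOn A (fun i (y : X) => f i • y) n p)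
    (hcB : ConvSeqOn B (fun i (y : X) => f i • y) n' p) (hne : n ≠ n') : A ∩ B = {p} := by
  refine Subset.antisymm ?_ (singleton_subset_iff.2 ⟨hcA.2.1, hcB.2.1⟩)
  rintro z ⟨hzA, hzB⟩
  by_contra hzp
  obtain ⟨U, U', hU, hU', hnU, hnU', hdisj⟩ := t2_separation hne
  have hz : p ∈ ({z}ᶜ : Set X) := fun h => hzp (by simpa using h.symm)
  have h1 := hcA.2.2 ((A ∩ B) \ U) (fun y hy => hy.1.1) ((hAc.inter hBc).sdiff hU).isCompact
    (fun h => h.2 hnU) {z}ᶜ isOpen_compl_singleton hz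
  have h2 := hcB.2.2 ((A ∩ B) \ U') (fun y hy => hy.1.2) ((hAc.inter hBc).sdiff hU').isCompact
    (fun h => h.2 hnU') {z}ᶜ isOpen_compl_singleton hz
  obtain ⟨i, hi1, hi2⟩ := (h1.and h2).exists
  have hwA : (f i)⁻¹ • z ∈ A := by
    rw [← Set.mem_smul_set_iff_inv_smul_mem, hfA i]
    exact hzA
  have hwB : (f i)⁻¹ • z ∈ B := by
    rw [← Set.mem_smul_set_iff_inv_smul_mem, hfB i]
    exact hzB
  by_cases hwU : (f i)⁻¹ • z ∈ U
  · exact hi2 ⟨_, ⟨⟨hwA, hwB⟩, fun h => hdisj.le_bot ⟨hwU, h⟩⟩, rfl⟩ (smul_inv_smul (f i) z)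
  · exact hi1 ⟨_, ⟨⟨hwA, hwB⟩, hwU⟩, rfl⟩ (smul_inv_smul (f i) z)

/-- The asymmetric half of the theorem: the repeller on `B` cannot differ both from the repeller
on `A` and from the common attractor. -/
lemma no_other_repeller {G X : Type*} [Group G] [MulAction G X]
    [MetricSpace X] [CompactSpace X] [LocallyConnectedSpace X] [ContinuousConstSMul G X]
    {𝓐 : Set (Set X)} (h : IsLocalConvPairing G 𝓐)
    {A B : Set X} (hA : A ∈ 𝓐) (hB : B ∈ 𝓐)
    {f : ℕ → G} (hfA : ∀ i, f i • A = A) (hfB : ∀ i, f i • B = B) {n p n' : X}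
    (hcA : ConvSeqOn A (fun i (x : X) => f i • x) n p)
    (hcB : ConvSeqOn B (fun i (x : X) => f i • x) n' p) (hne : n ≠ n') (hn'p : n' ≠ p) :
    False := by
  have hAc := h.closed A hA
  have hBc := h.closed B hB
  have hAB := inter_eq_singleton hAc hBc hfA hfB hcA hcB hne
  obtain ⟨q, hqB, φ, hφ, hq⟩ := hBc.isCompact.tendsto_subseq (x := fun i => f i • n')
    (fun i => hfB i ▸ smul_mem_smul_set hcB.1)
  -- the term `b` is `q` when possible, so that the crossing sequence avoids both `p` and `q`
  obtain ⟨m, hm1, c, hc0, hcB', hcm, hcc, hcd⟩ : CrossSeqAvoiding 𝓐 A B ({q, p} : Set X) := by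
    have hcon := (h.connect A hA B hB (by rw [hAB]; simp)).1 p hAB
    by_cases hqp : q = p
    · obtain ⟨m, hm, c, h0, h1, h2, h3, h4⟩ := hcon n' hcB.1 hn'p
      refine ⟨m, hm, c, h0, h1, h2, h3, fun i hi hi' => ?_⟩
      refine subset_empty_iff.1 ((inter_subset_inter_right _ ?_).trans (h4 i hi hi').subset)
      rw [hqp]
      simp
    · exact hcon q hqB hqp
  have hφt := hφ.tendsto_atTop
  set g : ℕ → G := fun i => (f (φ i))⁻¹ with hg
  have hgA : ∀ i, g i • A = A := fun i => by
    rw [hg]; simp only; rw [inv_smul_eq_iff, hfA]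
  have hgB : ∀ i, g i • B = B := fun i => by
    rw [hg]; simp only; rw [inv_smul_eq_iff, hfB]
  have hgc : ConvSeqOn B (fun i (x : X) => g i • x) p n' := by
    have hinv := convSeq_inv hBc hfB hcB
    exact ⟨hinv.1, hinv.2.1, fun K h1 h2 h3 U h4 h5 =>
      hφt.eventually (hinv.2.2 K h1 h2 h3 U h4 h5)⟩
  have hnot : ∀ j, 1 ≤ j → j ≤ m → ∀ᶠ i in atTop, n' ∉ g i • c j := by
    intro j hj hj'
    have hqj : q ∉ c j := fun hqc => by
      have : q ∈ c j ∩ {q, p} := ⟨hqc, by simp⟩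
      rw [hcd j hj hj'] at this
      exact this
    filter_upwards [hq.eventually
      ((h.closed _ (hcm j (by omega))).isOpen_compl.mem_nhds hqj)] with i hi hmem
    apply hi
    rw [Set.mem_smul_set_iff_inv_smul_mem] at hmem
    simpa [hg] using hmem
  -- downward induction along the crossing sequence
  have key : ∀ k, k ≤ m → EvMeets (fun i => g i • c (m - k)) n' := by
    intro k
    induction k with
    | zero =>
      intro _
      refine meets_of_crosses_convSeq (h.big B hB) hBc (h.closed _ (hcm m (by omega))) hgB hgc ?_
        (hcB' ▸ hcc m le_rfl)
      intro hpm
      have : p ∈ c m ∩ {q, p} := ⟨hpm, by simp⟩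
      rw [hcd m hm1 le_rfl] at this
      exact this
    | succ k ih =>
      intro hk
      have hshr : EvShrinks (fun i => g i • c (m - k)) n' :=
        shrinks_of_meets h.null h.closed (fun i => h.invariant _ _ (hcm _ (by omega)))
          (hnot _ (by omega) (by omega)) (ih (by omega))
      have hcr := hcc (m - (k + 1)) (by omega)
      rw [show m - (k + 1) + 1 = m - k by omega] at hcr
      exact meets_of_crosses_shrinks hcr hshr
  have hlast := key m le_rfl
  rw [Nat.sub_self, hc0] at hlast
  have hn'A : n' ∈ A := by
    by_contra hno
    obtain ⟨i, y, hy, hy'⟩ := (hlast Aᶜ (hAc.isOpen_compl.mem_nhds hno)).exists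
    exact hy' (hgA i ▸ hy)
  have : n' ∈ A ∩ B := ⟨hn'A, hcB.1⟩
  rw [hAB] at this
  exact hn'p this

/-- Lemma: if `(f_i) ⊆ st(A) ∩ st(B)` acts as a convergence sequence on both `A` and
`B` with the same attractor `p`, then the repellers coincide. -/
theorem same_attractor_same_repeller {G X : Type*} [Group G] [MulAction G X]
    [MetricSpace X] [CompactSpace X] [ConnectedSpace X] [LocallyConnectedSpace X]
    [ContinuousConstSMul G X]
    (hcut : ∀ x : X, IsPreconnected ({x}ᶜ : Set X))
    (𝓐 : Set (Set X)) (h : IsLocalConvPairing G 𝓐)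
    (A B : Set X) (hA : A ∈ 𝓐) (hB : B ∈ 𝓐)
    (f : ℕ → G) (hfA : ∀ i, f i ∈ stab G A) (hfB : ∀ i, f i ∈ stab G B)
    (n p n' : X)
    (hcA : ConvSeqOn A (fun i (x : X) => f i • x) n p)
    (hcB : ConvSeqOn B (fun i (x : X) => f i • x) n' p) :
    n' = n := by
  by_contra hcon
  by_cases hn'p : n' = p
  · have hnp : n ≠ p := fun hnp => hcon (hn'p.trans hnp.symm)
    exact no_other_repeller h hB hA hfB hfA hcB hcA hcon hnp
  · exact no_other_repeller h hA hB hfA hfB hcA hcB (Ne.symm hcon) hn'p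
end

section
/- Let (G, 𝓐) be a local convergence pairing on a Peano continuum X without cut points, and let A, B ∈ 𝓐 with A ∩ B ≠ ∅. If (f_i) ⊆ st(A) ∩ st(B) acts as a convergence sequence on both A and B, and n is the repeller and p the attractor of (f_i) in its action on A, then p is the attractor and n is the repeller of (f_i) in its action on B. -/
/-!
The proof follows the images `f i • A_j` of the members of a crossing sequence from `A` to `B`.

Suppose `E ∈ 𝓐` contains, or separates, points `x, y` with `f i • x, f i • y → p`. By local
connectedness `f i • E` meets every neighbourhood of `p` for large `i`. If `f i • E` failed to shrink
to `p`, nullness of `𝓐` would give a single set `K = f i • E` for infinitely many `i`; then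
`p ∈ K`, so `(f i)⁻¹ • p ∈ E` infinitely often. This is impossible if `(f i)⁻¹ • p → m` (along an
ultrafilter) and `m ∉ E`. Hence (`Shrinks.step`), along a crossing sequence whose intermediate terms
avoid `m` and the repeller `n`, all the intermediate terms shrink to `p`. The last one crosses `B`,
which gives `p ∈ B`, and also `p = p'` when the sequence avoids `n'` (`attractor_mem`).

The inverses `(f i)⁻¹` form a convergence sequence with attractor and repeller exchanged, and
`A ∩ B` is invariant. There are three cases.
* `|A ∩ B| > 2`: a point of `A ∩ B` other than `n, n'` is attracted to both `p` and `p'`.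
* `|A ∩ B| = 2`: invariance forces `n, n', p, p' ∈ A ∩ B`, and the crossing sequence avoiding
  `A ∩ B` gives `p = p'`.
* `A ∩ B = {c}`: invariance forces `c ∈ {n, p}`. If `c = n`, the crossing sequence avoiding
  `{m, c}`, with `m ∈ A` the limit above, gives `p ∈ B`, so `p = c`. If `c = p`, the same holds for
  the inverses. Thus `n = p = c`, and likewise `n' = p' = c`.
-/

open Set Filter Topology Pointwise

/-! ### Convergence sequences -/

/-- The images `f i • E` converge to the point `p` along the filter `l`. -/
def Shrinks {G X : Type*} [Group G] [MulAction G X] [TopologicalSpace X]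
    (l : Filter ℕ) (f : ℕ → G) (E : Set X) (p : X) : Prop :=
  ∀ U ∈ 𝓝 p, ∀ᶠ i in l, f i • E ⊆ U

/-- The set `E` contains `x`, or it separates `x` from `y`. -/
def Linked {X : Type*} [TopologicalSpace X] (E : Set X) (x y : X) : Prop :=
  x ∈ E ∨ (x ∉ E ∧ connectedComponentIn Eᶜ x ≠ connectedComponentIn Eᶜ y)

lemma ConvSeqOn.tendsto {G X : Type*} [Group G] [MulAction G X] [TopologicalSpace X]
    {A : Set X} {f : ℕ → G} {n p x : X}
    (hc : ConvSeqOn A (fun i (x : X) => f i • x) n p) (hx : x ∈ A) (hxn : x ≠ n) :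
    Tendsto (fun i => f i • x) atTop (𝓝 p) := by
  rw [tendsto_nhds]
  intro U hU hpU
  have := hc.2.2 {x} (by simpa using hx) isCompact_singleton (by simpa using hxn.symm) U hU hpU
  filter_upwards [this] with i hi
  exact hi ⟨x, rfl, rfl⟩

lemma inv_mem_stab {G X : Type*} [Group G] [MulAction G X] {A : Set X} {g : G}
    (hg : g ∈ stab G A) : g⁻¹ ∈ stab G A := by
  change g • A = A at hg
  change g⁻¹ • A = A
  rw [inv_smul_eq_iff, hg]

lemma smul_mem_of_stab {G X : Type*} [Group G] [MulAction G X] {A : Set X} {g : G} {x : X}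
    (hg : g ∈ stab G A) (hx : x ∈ A) : g • x ∈ A := by
  change g • A = A at hg
  rw [← hg]
  exact smul_mem_smul_set hx

/-- Inverting a convergence sequence exchanges attractor and repeller. -/
lemma ConvSeqOn.inv {G X : Type*} [Group G] [MulAction G X] [MetricSpace X] [CompactSpace X]
    {A : Set X} (hA : IsClosed A) {f : ℕ → G} (hf : ∀ i, f i ∈ stab G A) {n p : X}
    (hc : ConvSeqOn A (fun i (x : X) => f i • x) n p) :
    ConvSeqOn A (fun i (x : X) => (f i)⁻¹ • x) p n := by
  refine ⟨hc.2.1, hc.1, ?_⟩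
  intro C hCA hC hpC U hU hnU
  -- The compact set `A \ U` is eventually mapped off `C`.
  have := hc.2.2 (A \ U) sdiff_subset (hA.sdiff hU).isCompact (fun h => h.2 hnU)
    Cᶜ hC.isClosed.isOpen_compl hpC
  filter_upwards [this] with i hi
  rintro _ ⟨x, hx, rfl⟩
  by_contra hxU
  have hxA : (f i)⁻¹ • x ∈ A := smul_mem_of_stab (inv_mem_stab (hf i)) (hCA hx)
  have := hi ⟨(f i)⁻¹ • x, ⟨hxA, hxU⟩, rfl⟩
  simp only [smul_inv_smul] at this
  exact this hx

lemma exists_two_ne {X : Type*} {A : Set X} (hA : 2 < A.encard) (a : X) :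
    ∃ x ∈ A, ∃ y ∈ A, x ≠ a ∧ y ≠ a ∧ x ≠ y := by
  have h1 : 1 < (A \ {a}).encard := by
    by_contra hlt
    push Not at hlt
    have h2 : A.encard ≤ (A \ {a}).encard + ({a} : Set X).encard :=
      encard_le_encard_sdiff_add_encard A {a}
    rw [encard_singleton] at h2
    have h3 : A.encard ≤ 1 + 1 := h2.trans (by gcongr)
    norm_num at h3
    exact absurd h3 (not_le.mpr hA)
  obtain ⟨x, y, hx, hy, hxy⟩ := one_lt_encard_iff.mp h1
  exact ⟨x, hx.1, y, hy.1, hx.2, hy.2, hxy⟩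

/-- The attractor is an accumulation point of `A`. -/
lemma ConvSeqOn.acc {G X : Type*} [Group G] [MulAction G X] [TopologicalSpace X]
    {A : Set X} (hA2 : 2 < A.encard) {f : ℕ → G} (hf : ∀ i, f i ∈ stab G A) {n p : X}
    (hc : ConvSeqOn A (fun i (x : X) => f i • x) n p) {U : Set X} (hU : U ∈ 𝓝 p) :
    ∃ y ∈ A, y ∈ U ∧ y ≠ p := by
  obtain ⟨x, hx, y, hy, hxn, hyn, hxy⟩ := exists_two_ne hA2 n
  obtain ⟨i, hix, hiy⟩ := ((hc.tendsto hx hxn).eventually_mem hU |>.and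
    ((hc.tendsto hy hyn).eventually_mem hU)).exists
  by_cases h : f i • x = p
  · refine ⟨f i • y, smul_mem_of_stab (hf i) hy, hiy, fun h' => hxy ?_⟩
    exact smul_left_cancel (f i) (h.trans h'.symm)
  · exact ⟨f i • x, smul_mem_of_stab (hf i) hx, hix, h⟩

/-- A finite invariant subset of `A` that misses the repeller contains at most the attractor. -/
lemma ConvSeqOn.finite_invariant {G X : Type*} [Group G] [MulAction G X] [MetricSpace X]
    {A F : Set X} {f : ℕ → G} {n p : X}
    (hc : ConvSeqOn A (fun i (x : X) => f i • x) n p) (hF : F.Finite) (hFA : F ⊆ A)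
    (hf : ∀ i, f i ∈ stab G F) (hn : n ∉ F) : F ⊆ {p} := by
  have := hc.2.2 F hFA hF.isCompact hn (F \ {p})ᶜ
    (hF.subset sdiff_subset).isClosed.isOpen_compl (by simp)
  obtain ⟨i, hi⟩ := this.exists
  intro x hx
  by_contra hxp
  have hx' : (f i)⁻¹ • x ∈ F := smul_mem_of_stab (inv_mem_stab (hf i)) hx
  have := hi ⟨_, hx', rfl⟩
  simp only [smul_inv_smul] at this
  exact this ⟨hx, hxp⟩

/-! ### Sets linked with pairs of points -/

lemma Linked.meets {G X : Type*} [Group G] [MulAction G X] [TopologicalSpace X]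
    [ContinuousConstSMul G X] {E V : Set X} {x y : X} (hL : Linked E x y) (g : G)
    (hV : IsPreconnected V) (hx : g • x ∈ V) (hy : g • y ∈ V) : (g • E ∩ V).Nonempty := by
  rcases hL with hL | ⟨-, hL⟩
  · exact ⟨g • x, smul_mem_smul_set hL, hx⟩
  by_contra hne
  apply hL
  have hV' : IsPreconnected (g⁻¹ • V) := hV.image _ (continuous_const_smul g⁻¹).continuousOn
  have hx' : x ∈ g⁻¹ • V := mem_inv_smul_set_iff.mpr hx
  have hy' : y ∈ g⁻¹ • V := mem_inv_smul_set_iff.mpr hy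
  have hsub : g⁻¹ • V ⊆ Eᶜ := by
    intro z hz hzE
    exact hne ⟨g • z, smul_mem_smul_set hzE, mem_inv_smul_set_iff.mp hz⟩
  exact connectedComponentIn_eq (hV'.subset_connectedComponentIn hx' hsub hy')

lemma Crosses.exists_linked {X : Type*} [TopologicalSpace X] {E E' : Set X}
    (h : Crosses E E') : ∃ x ∈ E, ∃ y ∈ E, Linked E' x y := by
  rcases h with ⟨x, hx, hx'⟩ | ⟨-, hs, x, hx, y, hy, hxy⟩
  · exact ⟨x, hx, x, hx, Or.inl hx'⟩
  · exact ⟨x, hx, y, hy, Or.inr ⟨hs hx, hxy⟩⟩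

lemma Crosses.symm {X : Type*} [TopologicalSpace X] {E E' : Set X}
    (h : Crosses E E') : Crosses E' E := by
  rcases h with h | ⟨h, h'⟩
  · exact Or.inl (by rwa [inter_comm])
  · exact Or.inr ⟨h', h⟩

lemma CrossSeqAvoiding.symm {X : Type*} [TopologicalSpace X] {𝓐 : Set (Set X)} {A B D : Set X}
    (h : CrossSeqAvoiding 𝓐 A B D) : CrossSeqAvoiding 𝓐 B A D := by
  obtain ⟨k, hk, c, h0, h1, hmem, hcr, hD⟩ := h
  refine ⟨k, hk, fun i => c (k + 1 - i), by simpa using h1, by simpa using h0,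
    fun i _ => hmem _ (by omega), fun i hi => ?_, fun i hi hi' => hD _ (by omega) (by omega)⟩
  have := hcr (k - i) (by omega)
  rw [show k - i + 1 = k + 1 - i by omega] at this
  simpa [show k + 1 - (i + 1) = k - i by omega] using this.symm

/-- If `A` carries a convergence sequence, a closed set separating `A` separates two points of `A`
other than the repeller, because the repeller is an accumulation point of `A`. -/
lemma SepSet.exists_linked_ne {G X : Type*} [Group G] [MulAction G X] [MetricSpace X]
    [CompactSpace X] [LocallyConnectedSpace X]
    {A E : Set X} (hA : IsClosed A) (hA2 : 2 < A.encard) (hE : IsClosed E) {f : ℕ → G}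
    (hf : ∀ i, f i ∈ stab G A) {n p : X} (hc : ConvSeqOn A (fun i (x : X) => f i • x) n p)
    (hs : SepSet E A) : ∃ x ∈ A, ∃ y ∈ A, x ≠ n ∧ y ≠ n ∧ Linked E x y := by
  have key : ∀ z ∈ A, ∃ z' ∈ A, z' ≠ n ∧
      connectedComponentIn Eᶜ z' = connectedComponentIn Eᶜ z := by
    intro z hz
    by_cases hzn : z = n
    · subst hzn
      have hU : connectedComponentIn Eᶜ z ∈ 𝓝 z :=
        hE.isOpen_compl.connectedComponentIn.mem_nhds (mem_connectedComponentIn (hs.1 hz))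
      obtain ⟨y, hy, hyU, hyz⟩ :=
        (hc.inv hA hf).acc hA2 (fun i => inv_mem_stab (hf i)) hU
      exact ⟨y, hy, hyz, (connectedComponentIn_eq hyU).symm⟩
    · exact ⟨z, hz, hzn, rfl⟩
  obtain ⟨-, x, hx, y, hy, hxy⟩ := id hs
  obtain ⟨x', hx', hxn, hxe⟩ := key x hx
  obtain ⟨y', hy', hyn, hye⟩ := key y hy
  exact ⟨x', hx', y', hy', hxn, hyn, Or.inr ⟨hs.1 hx', by rwa [hxe, hye]⟩⟩

/-! ### Shrinking along crossing sequences -/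

lemma exists_preconnected_nhds {X : Type*} [TopologicalSpace X] [LocallyConnectedSpace X]
    {U : Set X} {p : X} (hU : U ∈ 𝓝 p) : ∃ V ∈ 𝓝 p, IsPreconnected V ∧ V ⊆ U := by
  obtain ⟨V, ⟨hVo, hpV, hV⟩, hVU⟩ :=
    (LocallyConnectedSpace.open_connected_basis p).mem_iff.mp hU
  exact ⟨V, hVo.mem_nhds hpV, hV.isPreconnected, hVU⟩

/-- A member of a null invariant family that is linked with two points attracted to `p` shrinks to
`p`, unless it contains the limit `m` of the preimages of `p`. -/
lemma shrinks_of_linked {G X : Type*} [Group G] [MulAction G X] [MetricSpace X] [CompactSpace X]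
    [LocallyConnectedSpace X] [ContinuousConstSMul G X]
    {𝓐 : Set (Set X)} (h : IsLocalConvPairing G 𝓐) {l : Filter ℕ} {f : ℕ → G} {E : Set X}
    (hE : E ∈ 𝓐) {p m x y : X} (hm : Tendsto (fun i => (f i)⁻¹ • p) l (𝓝 m)) (hmE : m ∉ E)
    (hx : Tendsto (fun i => f i • x) l (𝓝 p)) (hy : Tendsto (fun i => f i • y) l (𝓝 p))
    (hL : Linked E x y) : Shrinks l f E p := by
  have hmeet : ∀ U ∈ 𝓝 p, ∀ᶠ i in l, (f i • E ∩ U).Nonempty := by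
    intro U hU
    obtain ⟨V, hVp, hV, hVU⟩ := exists_preconnected_nhds hU
    filter_upwards [hx.eventually_mem hVp, hy.eventually_mem hVp] with i hix hiy
    exact (hL.meets (f i) hV hix hiy).mono (inter_subset_inter_right _ hVU)
  intro U hU
  obtain ⟨ε, hε, hεU⟩ := Metric.mem_nhds_iff.mp hU
  by_contra hnot
  -- Images that meet the `ε / 2`-ball and leave the `ε`-ball are large, so there are finitely many.
  have hfreq : ∃ᶠ i in l, f i • E ∈ {K ∈ 𝓐 | ε / 3 < Metric.diam K} := by
    have hfr : ∃ᶠ i in l, ¬ f i • E ⊆ U := not_eventually.mp hnot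
    refine (hfr.and_eventually (hmeet _ (Metric.ball_mem_nhds p (half_pos hε)))).mono ?_
    rintro i ⟨hi, z, hz, hzp⟩
    refine ⟨h.invariant _ _ hE, ?_⟩
    obtain ⟨w, hw, hwU⟩ := not_subset.mp hi
    have hwp : ε ≤ dist w p := by
      by_contra hlt
      exact hwU (hεU (Metric.mem_ball.mpr (not_le.mp hlt)))
    have h1 : dist w z ≤ Metric.diam (f i • E) :=
      Metric.dist_le_diam_of_mem (Metric.isBounded_of_compactSpace) hw hz
    have h2 := dist_triangle w z p
    have h3 := Metric.mem_ball.mp hzp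
    linarith
  obtain ⟨K, -, hK⟩ : ∃ K ∈ {K ∈ 𝓐 | ε / 3 < Metric.diam K}, ∃ᶠ i in l, f i • E = K := by
    by_contra hcon
    push Not at hcon
    have := (eventually_all_finite (h.null (ε / 3) (by positivity))).mpr
      (fun K hK => hcon K hK)
    obtain ⟨i, hi, hi'⟩ := (hfreq.and_eventually this).exists
    exact hi' _ hi rfl
  have hKcl : IsClosed K := by
    obtain ⟨i, hi⟩ := hK.exists
    rw [← hi]
    exact h.closed _ (h.invariant _ _ hE)
  have hpK : p ∈ K := by
    rw [← hKcl.closure_eq, mem_closure_iff_nhds]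
    intro V hV
    obtain ⟨i, hi, hi'⟩ := (hK.and_eventually (hmeet V hV)).exists
    rw [hi, inter_comm] at hi'
    exact hi'
  have hev : ∀ᶠ i in l, (f i)⁻¹ • p ∈ Eᶜ :=
    hm.eventually_mem ((h.closed E hE).isOpen_compl.mem_nhds hmE)
  obtain ⟨i, hi, hi'⟩ := (hK.and_eventually hev).exists
  rw [← hi] at hpK
  exact hi' (mem_smul_set_iff_inv_smul_mem.mp hpK)

lemma Shrinks.tendsto {G X : Type*} [Group G] [MulAction G X] [TopologicalSpace X]
    {l : Filter ℕ} {f : ℕ → G} {E : Set X} {p x : X} (hS : Shrinks l f E p) (hx : x ∈ E) :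
    Tendsto (fun i => f i • x) l (𝓝 p) := by
  intro U hU
  rw [mem_map]
  filter_upwards [hS U hU] with i hi
  exact hi (smul_mem_smul_set hx)

lemma Shrinks.step {G X : Type*} [Group G] [MulAction G X] [MetricSpace X] [CompactSpace X]
    [LocallyConnectedSpace X] [ContinuousConstSMul G X]
    {𝓐 : Set (Set X)} (h : IsLocalConvPairing G 𝓐) {l : Filter ℕ} {f : ℕ → G} {E E' : Set X}
    (hE' : E' ∈ 𝓐) {p m : X} (hm : Tendsto (fun i => (f i)⁻¹ • p) l (𝓝 m)) (hmE : m ∉ E')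
    (hS : Shrinks l f E p) (hcr : Crosses E E') : Shrinks l f E' p := by
  obtain ⟨x, hx, y, hy, hL⟩ := hcr.exists_linked
  exact shrinks_of_linked h hE' hm hmE (hS.tendsto hx) (hS.tendsto hy) hL

/-- If a crossing sequence from `A` to `B` avoids the repeller `n` on `A` and the limit `m` of the
preimages of the attractor `p`, then `p` lies in `B`; if it also avoids the repeller on `B`, then
`p` is the attractor on `B`. -/
lemma attractor_mem {G X : Type*} [Group G] [MulAction G X] [MetricSpace X] [CompactSpace X]
    [LocallyConnectedSpace X] [ContinuousConstSMul G X]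
    {𝓐 : Set (Set X)} (h : IsLocalConvPairing G 𝓐) {A B : Set X} (hA : A ∈ 𝓐) (hB : B ∈ 𝓐)
    {f : ℕ → G} (hfA : ∀ i, f i ∈ stab G A) (hfB : ∀ i, f i ∈ stab G B) {n p n' p' m : X}
    (hcA : ConvSeqOn A (fun i (x : X) => f i • x) n p)
    (hcB : ConvSeqOn B (fun i (x : X) => f i • x) n' p')
    {l : Filter ℕ} [l.NeBot] (hl : l ≤ atTop)
    (hm : Tendsto (fun i => (f i)⁻¹ • p) l (𝓝 m)) {D : Set X} (hnD : n ∈ D) (hmD : m ∈ D)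
    (hcs : CrossSeqAvoiding 𝓐 A B D) : p ∈ B ∧ (n' ∈ D → p' = p) := by
  obtain ⟨k, hk, c, h0, h1, hmem, hcr, hD⟩ := hcs
  have hnot : ∀ i, 1 ≤ i → i ≤ k → ∀ z ∈ D, z ∉ c i := fun i hi hi' z hz hzc =>
    (hD i hi hi').le ⟨hzc, hz⟩
  have hShr : ∀ i, 1 ≤ i → i ≤ k → Shrinks l f (c i) p := by
    intro i hi
    induction i, hi using Nat.le_induction with
    | base =>
      intro hk1
      have hc1 : c 1 ∈ 𝓐 := hmem 1 (by omega)
      have hcr0 : Crosses A (c 1) := by simpa [h0] using hcr 0 (by omega)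
      obtain ⟨x, hx, y, hy, hxn, hyn, hL⟩ :
          ∃ x ∈ A, ∃ y ∈ A, x ≠ n ∧ y ≠ n ∧ Linked (c 1) x y := by
        rcases hcr0 with ⟨x, hx, hx1⟩ | ⟨-, hs⟩
        · have hxn : x ≠ n := fun e => hnot 1 le_rfl hk1 n hnD (e ▸ hx1)
          exact ⟨x, hx, x, hx, hxn, hxn, Or.inl hx1⟩
        · exact hs.exists_linked_ne (h.closed A hA) (h.big A hA) (h.closed _ hc1) hfA hcA
      exact shrinks_of_linked h hc1 hm (hnot 1 le_rfl hk1 m hmD)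
        ((hcA.tendsto hx hxn).mono_left hl) ((hcA.tendsto hy hyn).mono_left hl) hL
    | succ i hi ih =>
      intro hik
      exact (ih (by omega)).step h (hmem _ (by omega)) hm (hnot _ (by omega) hik m hmD)
        (hcr i (by omega))
  have hS := hShr k hk le_rfl
  have hcrB : Crosses (c k) B := by simpa [h1] using hcr k le_rfl
  rcases hcrB with ⟨x, hxk, hxB⟩ | ⟨hs, -⟩
  · have hx := hS.tendsto hxk
    refine ⟨(h.closed B hB).mem_of_tendsto hx
      (Eventually.of_forall fun i => smul_mem_of_stab (hfB i) hxB), fun hn' => ?_⟩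
    have hxn : x ≠ n' := fun e => hnot k hk le_rfl n' hn' (e ▸ hxk)
    exact tendsto_nhds_unique ((hcB.tendsto hxB hxn).mono_left hl) hx
  · suffices hpp : p' = p from ⟨hpp ▸ hcB.2.1, fun _ => hpp⟩
    obtain ⟨x, hx, y, hy, hxn, hyn, hL⟩ := hs.exists_linked_ne (h.closed B hB) (h.big B hB)
      (h.closed _ (hmem k (by omega))) hfB hcB
    by_contra hne
    -- `f i • c k` separates two points close to `p'`, yet it is contained in a small
    -- neighbourhood of `p`.
    obtain ⟨U, W, hU, hW, hpU, hpW, hUW⟩ := t2_separation hne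
    obtain ⟨V, hVp, hV, hVU⟩ := exists_preconnected_nhds (hU.mem_nhds hpU)
    obtain ⟨i, ⟨hi1, hi2⟩, hi3⟩ :=
      ((((hcB.tendsto hx hxn).mono_left hl).eventually_mem hVp).and
        (((hcB.tendsto hy hyn).mono_left hl).eventually_mem hVp) |>.and
          (hS W (hW.mem_nhds hpW))).exists
    obtain ⟨z, hz, hzV⟩ := hL.meets (f i) hV hi1 hi2
    exact hUW.le_bot ⟨hVU hzV, hi3 hz⟩

/-- Some ultrafilter limit of `(f i)⁻¹ • p` exists and lies in any closed invariant set
containing `p`. -/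
lemma exists_limit {G X : Type*} [Group G] [MulAction G X] [MetricSpace X] [CompactSpace X]
    {F : Set X} (hF : IsClosed F) {f : ℕ → G} (hf : ∀ i, f i ∈ stab G F) {p : X} (hp : p ∈ F) :
    ∃ m ∈ F, Tendsto (fun i => (f i)⁻¹ • p) (hyperfilter ℕ : Filter ℕ) (𝓝 m) := by
  have hmem : ∀ i, (f i)⁻¹ • p ∈ F := fun i => smul_mem_of_stab (inv_mem_stab (hf i)) hp
  obtain ⟨m, hm, hle⟩ := hF.isCompact.ultrafilter_le_nhds
    ((hyperfilter ℕ).map fun i => (f i)⁻¹ • p)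
    (by
      rw [le_principal_iff]
      exact mem_map.mpr (univ_mem' hmem))
  exact ⟨m, hm, hle⟩

/-! ### The cases of the intersection -/

lemma hyperfilter_le_atTop' : (hyperfilter ℕ : Filter ℕ) ≤ atTop := by
  rw [← Nat.cofinite_eq_atTop]
  exact hyperfilter_le_cofinite

/-- If `A ∩ B` is the repeller alone, then attractor and repeller on `A` coincide. -/
lemma attractor_eq_repeller {G X : Type*} [Group G] [MulAction G X] [MetricSpace X]
    [CompactSpace X] [LocallyConnectedSpace X] [ContinuousConstSMul G X]
    {𝓐 : Set (Set X)} (h : IsLocalConvPairing G 𝓐) {A B : Set X} (hA : A ∈ 𝓐) (hB : B ∈ 𝓐)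
    {f : ℕ → G} (hfA : ∀ i, f i ∈ stab G A) (hfB : ∀ i, f i ∈ stab G B) {n p n' p' : X}
    (hcA : ConvSeqOn A (fun i (x : X) => f i • x) n p)
    (hcB : ConvSeqOn B (fun i (x : X) => f i • x) n' p') (hAB : A ∩ B = {n}) : p = n := by
  obtain ⟨m, hmA, hm⟩ := exists_limit (h.closed A hA) hfA hcA.2.1
  have hBA : B ∩ A = {n} := by rw [inter_comm, hAB]
  have hcard : (B ∩ A).encard ≤ 2 := by
    rw [hBA, encard_singleton]
    norm_num
  -- The avoided point of `A` is `m`, or an arbitrary one if `m` is already the common point.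
  obtain ⟨a, haA, han, hma⟩ : ∃ a ∈ A, a ≠ n ∧ m ∈ ({a, n} : Set X) := by
    by_cases hmn : m = n
    · obtain ⟨a, ha, -, -, han, -, -⟩ := exists_two_ne (h.big A hA) n
      exact ⟨a, ha, han, by simp [hmn]⟩
    · exact ⟨m, hmA, hmn, by simp⟩
  have hcs := ((h.connect B hB A hA hcard).1 n hBA a haA han).symm
  have hpB := (attractor_mem h hA hB hfA hfB hcA hcB hyperfilter_le_atTop' hm
    (by simp) hma hcs).1
  have : p ∈ A ∩ B := ⟨hcA.2.1, hpB⟩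
  rwa [hAB] at this

/-- If `A ∩ B` is a single point, it is both attractor and repeller on `A`. -/
lemma eq_of_inter_singleton {G X : Type*} [Group G] [MulAction G X] [MetricSpace X]
    [CompactSpace X] [LocallyConnectedSpace X] [ContinuousConstSMul G X]
    {𝓐 : Set (Set X)} (h : IsLocalConvPairing G 𝓐) {A B : Set X} (hA : A ∈ 𝓐) (hB : B ∈ 𝓐)
    {f : ℕ → G} (hfA : ∀ i, f i ∈ stab G A) (hfB : ∀ i, f i ∈ stab G B) {n p n' p' c : X}
    (hcA : ConvSeqOn A (fun i (x : X) => f i • x) n p)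
    (hcB : ConvSeqOn B (fun i (x : X) => f i • x) n' p') (hAB : A ∩ B = {c})
    (hfAB : ∀ i, f i ∈ stab G (A ∩ B)) : n = c ∧ p = c := by
  by_cases hcn : n = c
  · exact ⟨hcn, hcn ▸ attractor_eq_repeller h hA hB hfA hfB hcA hcB (hcn ▸ hAB)⟩
  · have hsub := hcA.finite_invariant (by rw [hAB]; exact finite_singleton c) inter_subset_left
      hfAB (by rw [hAB]; exact hcn)
    have hcp : c = p := hsub (by rw [hAB]; rfl)
    have := attractor_eq_repeller h hA hB (fun i => inv_mem_stab (hfA i))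
      (fun i => inv_mem_stab (hfB i)) (hcA.inv (h.closed A hA) hfA)
      (hcB.inv (h.closed B hB) hfB) (hcp ▸ hAB)
    exact ⟨this.trans hcp.symm, hcp.symm⟩

/-- The attractors on `A` and `B` agree if `A ∩ B` has at least two points. -/
lemma attractor_eq {G X : Type*} [Group G] [MulAction G X] [MetricSpace X]
    [CompactSpace X] [LocallyConnectedSpace X] [ContinuousConstSMul G X]
    {𝓐 : Set (Set X)} (h : IsLocalConvPairing G 𝓐) {A B : Set X} (hA : A ∈ 𝓐) (hB : B ∈ 𝓐)
    {f : ℕ → G} (hfA : ∀ i, f i ∈ stab G A) (hfB : ∀ i, f i ∈ stab G B) {n p n' p' : X}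
    (hcA : ConvSeqOn A (fun i (x : X) => f i • x) n p)
    (hcB : ConvSeqOn B (fun i (x : X) => f i • x) n' p') (hAB : (A ∩ B).Nonempty)
    (hns : ¬ ∃ c, A ∩ B = {c}) (hfAB : ∀ i, f i ∈ stab G (A ∩ B)) : p' = p := by
  by_cases hcard : (A ∩ B).encard ≤ 2
  · have hfin : (A ∩ B).Finite := finite_of_encard_le_coe (k := 2) hcard
    have hsingle : ∀ q, ¬ A ∩ B ⊆ {q} := fun q hq =>
      hns ⟨q, (subset_singleton_iff_eq.mp hq).resolve_left hAB.ne_empty⟩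
    have hn : n ∈ A ∩ B := by
      by_contra hn
      exact hsingle p (hcA.finite_invariant hfin inter_subset_left hfAB hn)
    have hn' : n' ∈ A ∩ B := by
      by_contra hn
      exact hsingle p' (hcB.finite_invariant hfin inter_subset_right hfAB hn)
    have hp : p ∈ A ∩ B := by
      by_contra hp
      exact hsingle n ((hcA.inv (h.closed A hA) hfA).finite_invariant hfin inter_subset_left
        (fun i => inv_mem_stab (hfAB i)) hp)
    obtain ⟨m, hmD, hm⟩ := exists_limit hfin.isClosed hfAB hp
    exact (attractor_mem h hA hB hfA hfB hcA hcB hyperfilter_le_atTop' hm hn hmD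
      ((h.connect A hA B hB hcard).2 hns)).2 hn'
  · obtain ⟨x, hx, y, hy, hxn, hyn, hxy⟩ := exists_two_ne (not_le.mp hcard) n
    obtain ⟨z, hz, hzn, hzn'⟩ : ∃ z ∈ A ∩ B, z ≠ n ∧ z ≠ n' := by
      by_cases hxn' : x = n'
      · exact ⟨y, hy, hyn, fun e => hxy (hxn'.trans e.symm)⟩
      · exact ⟨x, hx, hxn, hxn'⟩
    exact tendsto_nhds_unique (hcB.tendsto hz.2 hzn') (hcA.tendsto hz.1 hzn)

/-- Theorem: if `A ∩ B ≠ ∅` and `(f_i) ⊆ st(A) ∩ st(B)` acts as a convergence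
sequence on both `A` and `B`, with attractor `p` and repeller `n` on `A`, then the
attractor and repeller on `B` are also `p` and `n`. -/
theorem matching_attractor_repeller {G X : Type*} [Group G] [MulAction G X]
    [MetricSpace X] [CompactSpace X] [ConnectedSpace X] [LocallyConnectedSpace X]
    [ContinuousConstSMul G X]
    (hcut : ∀ x : X, IsPreconnected ({x}ᶜ : Set X))
    (𝓐 : Set (Set X)) (h : IsLocalConvPairing G 𝓐)
    (A B : Set X) (hA : A ∈ 𝓐) (hB : B ∈ 𝓐) (hAB : (A ∩ B).Nonempty)
    (f : ℕ → G) (hfA : ∀ i, f i ∈ stab G A) (hfB : ∀ i, f i ∈ stab G B)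
    (n p n' p' : X)
    (hcA : ConvSeqOn A (fun i (x : X) => f i • x) n p)
    (hcB : ConvSeqOn B (fun i (x : X) => f i • x) n' p') :
    p' = p ∧ n' = n := by
  have hfAB : ∀ i, f i ∈ stab G (A ∩ B) := by
    intro i
    change f i • (A ∩ B) = A ∩ B
    rw [smul_set_inter, hfA i, hfB i]
  by_cases hs : ∃ c, A ∩ B = {c}
  · obtain ⟨c, hc⟩ := hs
    have h1 := eq_of_inter_singleton h hA hB hfA hfB hcA hcB hc hfAB
    have h2 := eq_of_inter_singleton h hB hA hfB hfA hcB hcA (by rw [inter_comm, hc])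
      (by rw [inter_comm]; exact hfAB)
    exact ⟨h2.2.trans h1.2.symm, h2.1.trans h1.1.symm⟩
  · exact ⟨attractor_eq h hA hB hfA hfB hcA hcB hAB hs hfAB,
      attractor_eq h hA hB (fun i => inv_mem_stab (hfA i)) (fun i => inv_mem_stab (hfB i))
        (hcA.inv (h.closed A hA) hfA) (hcB.inv (h.closed B hB) hfB) hAB hs
        (fun i => inv_mem_stab (hfAB i))⟩
end
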